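/- arXiv:2605.21718 — 2 statements merged into one kernel-verified Lean document; each statement's English description precedes it below -/
import Mathlib

section
/- For every integer n ≥ 2 and every integer s ≥ 0 with 2^s ≤ n, the polynomial 1 + x^{2^s} does not divide num_B(n,x) in ℤ[x]. -/
open Polynomial Finset
open scoped Classical

/-- The binary partitions of `n`: partitions of `n` all of whose parts are powers of `2`. -/
noncomputable def binParts (n : ℕ) : Finset (Nat.Partition n) :=
  Finset.univ.filter (fun μ => ∀ i ∈ μ.parts, ∃ k : ℕ, i = 2 ^ k)

/-- `h_{B,λ}(x) = ∏_{k ≥ 0, 2^k ≤ n} (1+x^{2^k})^(⌊n/2^k⌋ - m_λ(2^k))` in `ℤ[x]`. -/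
noncomputable def hB (n : ℕ) (μ : Nat.Partition n) : Polynomial ℤ :=
  ∏ k ∈ (Finset.range (n + 1)).filter (fun k => 2 ^ k ≤ n),
    (1 + X ^ (2 ^ k)) ^ (n / 2 ^ k - μ.parts.count (2 ^ k))

/-- `G_B(n,x)`: the (normalized) gcd of the `h_{B,λ}(x)` over binary partitions `λ` of `n`. -/
noncomputable def GB (n : ℕ) : Polynomial ℤ :=
  (binParts n).gcd (hB n)

theorem GB_dvd_sum (n : ℕ) :
    ∃ q : Polynomial ℤ, (∑ μ ∈ binParts n, hB n μ) = GB n * q :=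
  exists_eq_mul_right_of_dvd (Finset.dvd_sum fun _ hμ => Finset.gcd_dvd hμ)

/-- `num_B(n,x) = (∑_{λ binary partition of n} h_{B,λ}(x)) / G_B(n,x)`. -/
noncomputable def numB (n : ℕ) : Polynomial ℤ :=
  (GB_dvd_sum n).choose

/-- The all-ones partition of `n`. -/
def onesPartition (n : ℕ) : Nat.Partition n :=
  Nat.Partition.ofSums n (Multiset.replicate n 1) (by simp)

theorem onesPartition_mem_binParts (n : ℕ) : onesPartition n ∈ binParts n := by
  simp only [binParts, Finset.mem_filter, Finset.mem_univ, true_and]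
  intro i hi
  have h1 : i = 1 := by
    rw [onesPartition, Nat.Partition.ofSums_parts] at hi
    exact Multiset.eq_of_mem_replicate (Multiset.mem_filter.mp hi).1
  exact ⟨0, by simp [h1]⟩

theorem GB_dvd_prod (n : ℕ) :
    ∃ q : Polynomial ℤ,
      (∏ k ∈ (Finset.range (n + 1)).filter (fun k => 2 ^ k ≤ n),
          ((1 : Polynomial ℤ) + X ^ (2 ^ k)) ^ (n / 2 ^ k)) = GB n * q :=
  exists_eq_mul_right_of_dvd <|
    dvd_trans (Finset.gcd_dvd (onesPartition_mem_binParts n))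
      (Finset.prod_dvd_prod_of_dvd _ _ fun _ _ => pow_dvd_pow _ (Nat.sub_le _ _))

/-- `den_B(n,x) = (∏_{k ≥ 0, 2^k ≤ n} (1+x^{2^k})^⌊n/2^k⌋) / G_B(n,x)`. -/
noncomputable def denB (n : ℕ) : Polynomial ℤ :=
  (GB_dvd_prod n).choose

/-!
Let `z` be a root of `1 + X ^ 2 ^ s` in the algebraic closure of `ℚ_[2]` and write `r = n % 2 ^ s`.
The factor `1 + z ^ 2 ^ s` kills every `h_{B,λ}(z)` for which `λ` does not contain `2 ^ s` as often
as possible, so `∑_λ h_{B,λ}(z)` is a nonzero multiple of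
`A_r(z) = ∑_{μ binary partition of r} ∏_{i ∈ μ} 1 / (1 + z ^ i)`.

Removing a part `1`, or halving all parts when there is none, gives recurrences for
`B_r(z) = (1 + z) ^ r A_r(z)` which relate it to `B` at `z` and at `z ^ 2`. The elements `1 + z` and
`1 + z ^ 2` have absolute values `|2| ^ (1 / 2 ^ s)` and `|2| ^ (2 / 2 ^ s)`, and by the ultrametric
inequality a single term of each recurrence dominates. Hence
`|B_r(z)| = |2| / |1 + z| ^ q` for even `0 < r < 2 ^ s`, where `q` is the largest power of `2`
dividing `r`, and in particular `A_r(z) ≠ 0`.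
-/

/-- The binary partitions of `n` as multisets of parts, so that partitions of different integers
have the same type. -/
noncomputable def binMultisets (n : ℕ) : Finset (Multiset ℕ) :=
  (binParts n).image Nat.Partition.parts

theorem mem_binMultisets {n : ℕ} {M : Multiset ℕ} :
    M ∈ binMultisets n ↔ M.sum = n ∧ ∀ i ∈ M, ∃ k : ℕ, i = 2 ^ k := by
  simp only [binMultisets, mem_image, binParts, mem_filter, mem_univ, true_and]
  constructor
  · rintro ⟨μ, hμ, rfl⟩
    exact ⟨μ.parts_sum, hμ⟩
  · rintro ⟨hsum, hpow⟩
    refine ⟨⟨M, fun {i} hi => ?_, hsum⟩, hpow, rfl⟩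
    obtain ⟨k, rfl⟩ := hpow i hi
    positivity

theorem sum_binParts_eq_sum_binMultisets {β : Type*} [AddCommMonoid β] (n : ℕ)
    (f : Multiset ℕ → β) : ∑ μ ∈ binParts n, f μ.parts = ∑ M ∈ binMultisets n, f M := by
  rw [binMultisets, sum_image fun _ _ _ _ h => Nat.Partition.ext h]

theorem binMultisets_zero : binMultisets 0 = {0} := by
  ext M
  rw [mem_binMultisets, mem_singleton]
  refine ⟨fun ⟨hsum, hpow⟩ => Multiset.eq_zero_of_forall_notMem fun i hi => ?_, ?_⟩
  · obtain ⟨k, rfl⟩ := hpow i hi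
    exact (Nat.two_pow_pos k).ne' (Multiset.sum_eq_zero_iff.1 hsum _ hi)
  · rintro rfl
    simp

theorem add_replicate_mem_binMultisets_iff {r c s : ℕ} {M : Multiset ℕ} :
    M + Multiset.replicate c (2 ^ s) ∈ binMultisets (r + c * 2 ^ s) ↔ M ∈ binMultisets r := by
  simp only [mem_binMultisets, Multiset.sum_add, Multiset.sum_replicate, smul_eq_mul,
    Nat.add_right_cancel_iff, Multiset.mem_add]
  refine and_congr_right fun _ => ⟨fun h i hi => h i (.inl hi), ?_⟩
  rintro h i (hi | hi)
  · exact h i hi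
  · exact ⟨s, Multiset.eq_of_mem_replicate hi⟩

theorem sum_binMultisets_filter_le_count {β : Type*} [AddCommMonoid β] (r c s : ℕ)
    (f : Multiset ℕ → β) :
    ∑ M ∈ binMultisets (r + c * 2 ^ s) with c ≤ M.count (2 ^ s), f M =
      ∑ M ∈ binMultisets r, f (M + Multiset.replicate c (2 ^ s)) := by
  have filter_eq : {M ∈ binMultisets (r + c * 2 ^ s) | c ≤ M.count (2 ^ s)} =
      (binMultisets r).image (· + Multiset.replicate c (2 ^ s)) := by
    ext M
    simp only [mem_filter, mem_image, Multiset.le_count_iff_replicate_le]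
    constructor
    · rintro ⟨hM, hle⟩
      obtain ⟨N, rfl⟩ := Multiset.le_iff_exists_add.1 hle
      rw [add_comm _ N] at hM ⊢
      exact ⟨N, add_replicate_mem_binMultisets_iff.1 hM, rfl⟩
    · rintro ⟨N, hN, rfl⟩
      exact ⟨add_replicate_mem_binMultisets_iff.2 hN, Multiset.le_add_left _ _⟩
  rw [filter_eq, sum_image fun _ _ _ _ h => add_right_cancel h]

theorem sum_binMultisets_filter_one_mem {β : Type*} [AddCommMonoid β] (r : ℕ)
    (f : Multiset ℕ → β) :
    ∑ M ∈ binMultisets (r + 1) with 1 ∈ M, f M = ∑ M ∈ binMultisets r, f (1 ::ₘ M) := by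
  simpa [Multiset.one_le_count_iff_mem, add_comm _ {1}] using
    sum_binMultisets_filter_le_count r 1 0 f

theorem map_two_mul_mem_binMultisets_iff {m : ℕ} {M : Multiset ℕ} :
    M.map (2 * ·) ∈ binMultisets (2 * m) ↔ M ∈ binMultisets m := by
  have two_mul_eq_two_pow (i : ℕ) : (∃ k, 2 * i = 2 ^ k) ↔ ∃ k, i = 2 ^ k := by
    constructor
    · rintro ⟨_ | k, hk⟩
      · omega
      · exact ⟨k, by rw [pow_succ] at hk; omega⟩
    · rintro ⟨k, rfl⟩
      exact ⟨k + 1, (pow_succ' 2 k).symm⟩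
  have sum_eq : (M.map (2 * ·)).sum = 2 * M.sum := by
    rw [Multiset.sum_map_mul_left, Multiset.map_id']
  simp [mem_binMultisets, sum_eq, two_mul_eq_two_pow]

theorem two_dvd_of_mem_of_one_notMem {n i : ℕ} {M : Multiset ℕ} (hM : M ∈ binMultisets n)
    (h1 : 1 ∉ M) (hi : i ∈ M) : 2 ∣ i := by
  obtain ⟨_ | k, rfl⟩ := (mem_binMultisets.1 hM).2 i hi
  · exact absurd hi h1
  · exact dvd_pow_self 2 k.succ_ne_zero

theorem one_mem_of_mem_binMultisets_of_odd {n : ℕ} {M : Multiset ℕ} (hn : Odd n)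
    (hM : M ∈ binMultisets n) : 1 ∈ M := by
  by_contra h1
  refine Nat.not_even_iff_odd.2 hn (even_iff_two_dvd.2 ?_)
  rw [← (mem_binMultisets.1 hM).1]
  exact Multiset.dvd_sum fun i hi => two_dvd_of_mem_of_one_notMem hM h1 hi

theorem sum_binMultisets_filter_one_notMem {β : Type*} [AddCommMonoid β] (m : ℕ)
    (f : Multiset ℕ → β) :
    ∑ M ∈ binMultisets (2 * m) with 1 ∉ M, f M = ∑ M ∈ binMultisets m, f (M.map (2 * ·)) := by
  have filter_eq : {M ∈ binMultisets (2 * m) | 1 ∉ M} =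
      (binMultisets m).image (Multiset.map (2 * ·)) := by
    ext M
    simp only [mem_filter, mem_image]
    constructor
    · rintro ⟨hM, h1⟩
      have map_div_two : (M.map (· / 2)).map (2 * ·) = M := by
        rw [Multiset.map_map]
        exact (Multiset.map_congr rfl fun i hi =>
          Nat.mul_div_cancel' (two_dvd_of_mem_of_one_notMem hM h1 hi)).trans M.map_id'
      rw [← map_div_two] at hM
      exact ⟨_, map_two_mul_mem_binMultisets_iff.1 hM, map_div_two⟩
    · rintro ⟨N, hN, rfl⟩
      exact ⟨map_two_mul_mem_binMultisets_iff.2 hN, by simp⟩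
  rw [filter_eq, sum_image fun _ _ _ _ h =>
    Multiset.map_injective (mul_right_injective₀ two_ne_zero) h]

theorem count_two_pow_le_div {n k : ℕ} {M : Multiset ℕ} (hM : M ∈ binMultisets n) :
    M.count (2 ^ k) ≤ n / 2 ^ k := by
  have replicate_le : Multiset.replicate (M.count (2 ^ k)) (2 ^ k) ≤ M :=
    Multiset.le_count_iff_replicate_le.1 le_rfl
  obtain ⟨N, hN⟩ := Multiset.le_iff_exists_add.1 replicate_le
  have sum_eq : n = M.count (2 ^ k) * 2 ^ k + N.sum := by
    rw [← (mem_binMultisets.1 hM).1, ← smul_eq_mul, ← Multiset.sum_replicate, ← Multiset.sum_add,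
      ← hN]
  rw [Nat.le_div_iff_mul_le (by positivity), sum_eq]
  exact Nat.le_add_right _ _

section Recurrences

variable {K : Type*} [Field K]

/-- The summand `∏_{i ∈ M} 1 / (1 + z ^ i)` of `A_r(z)`. -/
noncomputable def reciprocalWeight (z : K) (M : Multiset ℕ) : K :=
  (M.map fun i => (1 + z ^ i)⁻¹).prod

theorem reciprocalWeight_cons (z : K) (i : ℕ) (M : Multiset ℕ) :
    reciprocalWeight z (i ::ₘ M) = (1 + z ^ i)⁻¹ * reciprocalWeight z M := by
  simp [reciprocalWeight]

theorem reciprocalWeight_map_two_mul (z : K) (M : Multiset ℕ) :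
    reciprocalWeight z (M.map (2 * ·)) = reciprocalWeight (z ^ 2) M := by
  simp [reciprocalWeight, pow_mul]

/-- The sum `A_r(z)` of `reciprocalWeight z` over the binary partitions of `r`. -/
noncomputable def binSum (z : K) (r : ℕ) : K :=
  ∑ M ∈ binMultisets r, reciprocalWeight z M

theorem binSum_zero (z : K) : binSum z 0 = 1 := by
  simp [binSum, binMultisets_zero, reciprocalWeight]

theorem sum_reciprocalWeight_filter_one_mem (z : K) (r : ℕ) :
    ∑ M ∈ binMultisets (r + 1) with 1 ∈ M, reciprocalWeight z M = (1 + z)⁻¹ * binSum z r := by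
  simp [sum_binMultisets_filter_one_mem, reciprocalWeight_cons, binSum, mul_sum]

theorem binSum_two_mul_add_one (z : K) (m : ℕ) :
    binSum z (2 * m + 1) = (1 + z)⁻¹ * binSum z (2 * m) := by
  rw [← sum_reciprocalWeight_filter_one_mem, filter_true_of_mem fun M hM =>
    one_mem_of_mem_binMultisets_of_odd (odd_two_mul_add_one m) hM, binSum]

theorem binSum_two_mul_add_two (z : K) (m : ℕ) :
    binSum z (2 * m + 2) = (1 + z)⁻¹ * binSum z (2 * m + 1) + binSum (z ^ 2) (m + 1) := by
  have without_one : ∑ M ∈ binMultisets (2 * m + 2) with 1 ∉ M, reciprocalWeight z M =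
      binSum (z ^ 2) (m + 1) := by
    simp [← mul_add_one, sum_binMultisets_filter_one_notMem, reciprocalWeight_map_two_mul, binSum]
  rw [← sum_reciprocalWeight_filter_one_mem, ← without_one, sum_filter_add_sum_filter_not, binSum]

/-- The normalization `B_r(z) = (1 + z) ^ r A_r(z)` of `binSum`. -/
noncomputable def scaledBinSum (z : K) (r : ℕ) : K :=
  (1 + z) ^ r * binSum z r

/-- The quotient `(1 + z) ^ 2 / (1 + z ^ 2)` occurring in the recurrences for `scaledBinSum`. -/
def sqRatio (z : K) : K :=
  (1 + z) ^ 2 / (1 + z ^ 2)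

theorem scaledBinSum_zero (z : K) : scaledBinSum z 0 = 1 := by
  simp [scaledBinSum, binSum_zero]

theorem scaledBinSum_two_mul_add_one {z : K} (hz : 1 + z ≠ 0) (m : ℕ) :
    scaledBinSum z (2 * m + 1) = scaledBinSum z (2 * m) := by
  rw [scaledBinSum, scaledBinSum, binSum_two_mul_add_one, pow_succ, mul_assoc,
    mul_inv_cancel_left₀ hz]

theorem scaledBinSum_two_mul_add_two {z : K} (hz : 1 + z ≠ 0) (hz2 : 1 + z ^ 2 ≠ 0) (m : ℕ) :
    scaledBinSum z (2 * m + 2) =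
      scaledBinSum z (2 * m) + sqRatio z ^ (m + 1) * scaledBinSum (z ^ 2) (m + 1) := by
  rw [← scaledBinSum_two_mul_add_one hz, scaledBinSum, scaledBinSum, scaledBinSum,
    binSum_two_mul_add_two, sqRatio, div_pow, ← pow_mul]
  field_simp
  ring

theorem scaledBinSum_two {z : K} (hz : 1 + z ≠ 0) (hz2 : 1 + z ^ 2 ≠ 0) :
    scaledBinSum z 2 = 1 + sqRatio z := by
  have h := scaledBinSum_two_mul_add_two hz hz2 0
  rwa [zero_add, scaledBinSum_two_mul_add_one hz2 0, mul_zero, scaledBinSum_zero,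
    scaledBinSum_zero, pow_one, mul_one, zero_add] at h

theorem scaledBinSum_four_mul_add_four {z : K} (hz : 1 + z ≠ 0) (hz2 : 1 + z ^ 2 ≠ 0) (t : ℕ) :
    scaledBinSum z (4 * t + 4) = scaledBinSum z (4 * t + 2) +
      sqRatio z ^ (2 * t + 2) * scaledBinSum (z ^ 2) (2 * t + 2) := by
  have h := scaledBinSum_two_mul_add_two hz hz2 (2 * t + 1)
  rwa [show 2 * (2 * t + 1) = 4 * t + 2 by ring] at h

theorem scaledBinSum_four_mul_add_six {z : K} (hz : 1 + z ≠ 0) (hz2 : 1 + z ^ 2 ≠ 0) (t : ℕ) :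
    scaledBinSum z (4 * t + 6) = scaledBinSum z (4 * t + 2) +
      sqRatio z ^ (2 * t + 2) * (1 + sqRatio z) * scaledBinSum (z ^ 2) (2 * t + 2) := by
  have step : scaledBinSum z (4 * t + 6) = scaledBinSum z (4 * t + 4) +
      sqRatio z ^ (2 * t + 3) * scaledBinSum (z ^ 2) (2 * t + 3) := by
    have h := scaledBinSum_two_mul_add_two hz hz2 (2 * t + 2)
    rwa [show 2 * (2 * t + 2) = 4 * t + 4 by ring] at h
  have odd_eq : scaledBinSum (z ^ 2) (2 * t + 3) = scaledBinSum (z ^ 2) (2 * t + 2) :=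
    scaledBinSum_two_mul_add_one hz2 (t + 1)
  rw [step, scaledBinSum_four_mul_add_four hz hz2, odd_eq]
  ring

end Recurrences

theorem pow_two_pow_eq_neg_one_unique {R : Type*} [Ring R] [NeZero (2 : R)] {z : R} {k s : ℕ}
    (hk : z ^ 2 ^ k = -1) (hs : z ^ 2 ^ s = -1) : k = s := by
  have orderOf_eq {j : ℕ} (hj : z ^ 2 ^ j = -1) : orderOf z = 2 ^ (j + 1) := by
    refine orderOf_eq_prime_pow ?_ (by rw [pow_succ, pow_mul, hj, neg_one_sq])
    rw [hj, neg_eq_iff_add_eq_zero, one_add_one_eq_two]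
    exact two_ne_zero
  have h := (orderOf_eq hk).symm.trans (orderOf_eq hs)
  exact Nat.succ_injective (Nat.pow_right_injective le_rfl h)

theorem one_add_pow_two_pow_ne_zero {R : Type*} [Ring R] [NeZero (2 : R)] {z : R} {k s : ℕ}
    (hs : z ^ 2 ^ s = -1) (hks : k ≠ s) : 1 + z ^ 2 ^ k ≠ 0 := fun h =>
  hks (pow_two_pow_eq_neg_one_unique (neg_eq_of_add_eq_zero_right h).symm hs)

theorem one_add_ne_zero_of_pow_two_pow {R : Type*} [Ring R] [NeZero (2 : R)] {z : R} {s : ℕ}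
    (hz : z ^ 2 ^ (s + 1) = -1) : 1 + z ≠ 0 := by
  simpa using one_add_pow_two_pow_ne_zero (k := 0) hz s.succ_ne_zero.symm

theorem sq_pow_two_pow {M : Type*} [Monoid M] (z : M) (s : ℕ) :
    (z ^ 2) ^ 2 ^ s = z ^ 2 ^ (s + 1) := by
  rw [← pow_mul, ← pow_succ']

theorem norm_eq_one_of_pow_eq_neg_one {K : Type*} [NormedDivisionRing K] {z : K} {n : ℕ}
    (hn : n ≠ 0) (hz : z ^ n = -1) : ‖z‖ = 1 := by
  rw [← pow_eq_one_iff_of_nonneg (norm_nonneg z) hn, ← norm_pow, hz, norm_neg, norm_one]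

theorem norm_add_eq_left_of_lt {G : Type*} [SeminormedAddCommGroup G] [IsUltrametricDist G]
    {x y : G} (h : ‖y‖ < ‖x‖) : ‖x + y‖ = ‖x‖ := by
  rw [IsUltrametricDist.norm_add_eq_max_of_norm_ne_norm h.ne', max_eq_left h.le]

theorem ordProj_two_mul {m : ℕ} (hm : m ≠ 0) : ordProj[2] (2 * m) = 2 * ordProj[2] m := by
  rw [Nat.ordProj_mul 2 two_ne_zero hm, Nat.prime_two.factorization_self, pow_one]

theorem ordProj_four_mul_add_two (t : ℕ) : ordProj[2] (4 * t + 2) = 2 := by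
  rw [show 4 * t + 2 = 2 * (2 * t + 1) by ring, ordProj_two_mul (by omega),
    Nat.factorization_eq_zero_of_not_dvd (by omega), pow_zero,
    mul_one]

section Norm

variable {K : Type*} [NormedField K] [IsUltrametricDist K]

theorem norm_one_add_sq_of_norm_two_lt {z : K} (hz : ‖z‖ = 1) (h : ‖(2 : K)‖ < ‖1 + z ^ 2‖) :
    ‖1 + z ^ 2‖ = ‖1 + z‖ ^ 2 := by
  have dominated : ‖2 * z‖ < ‖1 + z ^ 2‖ := by rwa [norm_mul, hz, mul_one]
  rw [← norm_add_eq_left_of_lt dominated, ← norm_pow]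
  ring_nf

variable [NeZero (2 : K)]

theorem norm_one_add_pow_two_pow (h2 : ‖(2 : K)‖ < 1) {s : ℕ} {z : K}
    (hz : z ^ 2 ^ (s + 1) = -1) : ‖1 + z‖ ^ 2 ^ (s + 1) = ‖(2 : K)‖ := by
  have norm_z : ‖z‖ = 1 := norm_eq_one_of_pow_eq_neg_one (by positivity) hz
  induction s generalizing z with
  | zero =>
    rw [zero_add, pow_one] at hz ⊢
    have sq_eq : (1 + z) ^ 2 = 2 * z := by linear_combination hz
    rw [← norm_pow, sq_eq, norm_mul, norm_z, mul_one]
  | succ s ih =>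
    have hz2 : (z ^ 2) ^ 2 ^ (s + 1) = -1 := by rwa [sq_pow_two_pow]
    have norm_pow_eq := ih hz2 (by rw [norm_pow, norm_z, one_pow])
    have norm_lt_one : ‖1 + z ^ 2‖ < 1 := by
      rwa [← pow_lt_one_iff_of_nonneg (norm_nonneg _) (Nat.two_pow_pos (s + 1)).ne', norm_pow_eq]
    have norm_two_lt : ‖(2 : K)‖ < ‖1 + z ^ 2‖ := by
      rw [← norm_pow_eq]
      exact pow_lt_self_of_lt_one₀ (norm_pos_iff.2 (one_add_ne_zero_of_pow_two_pow hz2))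
        norm_lt_one (Nat.one_lt_two_pow s.succ_ne_zero)
    rw [pow_succ' 2 (s + 1), pow_mul, ← norm_one_add_sq_of_norm_two_lt norm_z norm_two_lt,
      norm_pow_eq]

theorem norm_one_add_lt_one (h2 : ‖(2 : K)‖ < 1) {s : ℕ} {z : K}
    (hz : z ^ 2 ^ (s + 1) = -1) : ‖1 + z‖ < 1 := by
  rwa [← pow_lt_one_iff_of_nonneg (norm_nonneg _) (Nat.two_pow_pos (s + 1)).ne',
    norm_one_add_pow_two_pow h2 hz]

theorem norm_two_lt_norm_one_add_pow (h2 : ‖(2 : K)‖ < 1) {s j : ℕ} {z : K}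
    (hz : z ^ 2 ^ (s + 1) = -1) (hj : j < 2 ^ (s + 1)) : ‖(2 : K)‖ < ‖1 + z‖ ^ j := by
  rw [← norm_one_add_pow_two_pow h2 hz]
  exact pow_lt_pow_right_of_lt_one₀ (norm_pos_iff.2 (one_add_ne_zero_of_pow_two_pow hz))
    (norm_one_add_lt_one h2 hz) hj

theorem norm_one_add_sq (h2 : ‖(2 : K)‖ < 1) {s : ℕ} {z : K} (hz : z ^ 2 ^ (s + 2) = -1) :
    ‖1 + z ^ 2‖ = ‖1 + z‖ ^ 2 := by
  have hz2 : (z ^ 2) ^ 2 ^ (s + 1) = -1 := by rwa [sq_pow_two_pow]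
  refine norm_one_add_sq_of_norm_two_lt
    (norm_eq_one_of_pow_eq_neg_one (by positivity) hz) ?_
  simpa using norm_two_lt_norm_one_add_pow h2 hz2 (Nat.one_lt_two_pow s.succ_ne_zero)

theorem norm_sqRatio (h2 : ‖(2 : K)‖ < 1) {s : ℕ} {z : K} (hz : z ^ 2 ^ (s + 2) = -1) :
    ‖sqRatio z‖ = 1 := by
  have hz1 : ‖1 + z‖ ≠ 0 := norm_ne_zero_iff.2 (one_add_ne_zero_of_pow_two_pow hz)
  rw [sqRatio, norm_div, norm_pow, norm_one_add_sq h2 hz, div_self (pow_ne_zero 2 hz1)]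

theorem norm_one_add_sqRatio (h2 : ‖(2 : K)‖ < 1) {s : ℕ} {z : K}
    (hz : z ^ 2 ^ (s + 2) = -1) : ‖1 + sqRatio z‖ = ‖(2 : K)‖ / ‖1 + z‖ ^ 2 := by
  have hz2 : 1 + z ^ 2 ≠ 0 := by
    simpa using one_add_pow_two_pow_ne_zero (k := 1) hz (by omega)
  have one_add_eq : 1 + sqRatio z = 2 * (1 + z * (1 + z)) / (1 + z ^ 2) := by
    rw [sqRatio]
    field_simp
    ring
  have dominated : ‖z * (1 + z)‖ < ‖(1 : K)‖ := by
    rw [norm_mul, norm_eq_one_of_pow_eq_neg_one (by positivity) hz, one_mul, norm_one]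
    exact norm_one_add_lt_one h2 hz
  rw [one_add_eq, norm_div, norm_mul, norm_add_eq_left_of_lt dominated, norm_one, mul_one,
    norm_one_add_sq h2 hz]

theorem norm_scaledBinSum_four_mul_add_two (h2 : ‖(2 : K)‖ < 1) {s : ℕ} {z : K}
    (hz : z ^ 2 ^ (s + 2) = -1) {t : ℕ}
    (hsq : ∀ i < t, ‖scaledBinSum (z ^ 2) (2 * i + 2)‖ < 1) :
    ‖scaledBinSum z (4 * t + 2)‖ = ‖(2 : K)‖ / ‖1 + z‖ ^ 2 := by
  have hz1 : 1 + z ≠ 0 := one_add_ne_zero_of_pow_two_pow hz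
  have hz2 : 1 + z ^ 2 ≠ 0 :=
    one_add_ne_zero_of_pow_two_pow (s := s) (by rwa [sq_pow_two_pow])
  induction t with
  | zero => rw [mul_zero, zero_add, scaledBinSum_two hz1 hz2, norm_one_add_sqRatio h2 hz]
  | succ t ih =>
    have norm_prev := ih fun i hi => hsq i (hi.trans t.lt_succ_self)
    have dominated : ‖sqRatio z ^ (2 * t + 2) * (1 + sqRatio z) *
        scaledBinSum (z ^ 2) (2 * t + 2)‖ < ‖scaledBinSum z (4 * t + 2)‖ := by
      rw [norm_prev, norm_mul, norm_mul, norm_pow, norm_sqRatio h2 hz, one_pow, one_mul,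
        norm_one_add_sqRatio h2 hz]
      exact mul_lt_of_lt_one_right
        (div_pos (norm_pos_iff.2 two_ne_zero) (pow_pos (norm_pos_iff.2 hz1) 2))
        (hsq t t.lt_succ_self)
    rw [show 4 * (t + 1) + 2 = 4 * t + 6 by ring, scaledBinSum_four_mul_add_six hz1 hz2,
      norm_add_eq_left_of_lt dominated, norm_prev]

theorem norm_scaledBinSum_four_mul_add_four (h2 : ‖(2 : K)‖ < 1) {s : ℕ} {z : K}
    (hz : z ^ 2 ^ (s + 2) = -1) {t : ℕ}
    (hodd : ‖scaledBinSum z (4 * t + 2)‖ = ‖(2 : K)‖ / ‖1 + z‖ ^ 2)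
    (hhalf : ‖scaledBinSum (z ^ 2) (2 * t + 2)‖ =
      ‖(2 : K)‖ / ‖1 + z ^ 2‖ ^ ordProj[2] (2 * t + 2)) :
    ‖scaledBinSum z (4 * t + 4)‖ = ‖(2 : K)‖ / ‖1 + z‖ ^ ordProj[2] (4 * t + 4) := by
  have hz1 : 1 + z ≠ 0 := one_add_ne_zero_of_pow_two_pow hz
  have hz2 : 1 + z ^ 2 ≠ 0 :=
    one_add_ne_zero_of_pow_two_pow (s := s) (by rwa [sq_pow_two_pow])
  have norm_main : ‖sqRatio z ^ (2 * t + 2) * scaledBinSum (z ^ 2) (2 * t + 2)‖ =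
      ‖(2 : K)‖ / ‖1 + z‖ ^ ordProj[2] (4 * t + 4) := by
    rw [norm_mul, norm_pow, norm_sqRatio h2 hz, one_pow, one_mul, hhalf, norm_one_add_sq h2 hz,
      ← pow_mul, show 4 * t + 4 = 2 * (2 * t + 2) by ring,
      ordProj_two_mul (Nat.succ_ne_zero (2 * t + 1))]
  have two_lt_ordProj : 2 < ordProj[2] (4 * t + 4) := by
    have four_dvd : 2 ^ 2 ∣ ordProj[2] (4 * t + 4) :=
      (Nat.prime_two.pow_dvd_iff_dvd_ordProj (by omega)).1 ⟨t + 1, by ring⟩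
    have := Nat.le_of_dvd (Nat.ordProj_pos _ 2) four_dvd
    omega
  have dominated : ‖scaledBinSum z (4 * t + 2)‖ <
      ‖sqRatio z ^ (2 * t + 2) * scaledBinSum (z ^ 2) (2 * t + 2)‖ := by
    rw [hodd, norm_main]
    have norm_one_add_pos : 0 < ‖1 + z‖ := norm_pos_iff.2 hz1
    exact div_lt_div_of_pos_left (norm_pos_iff.2 two_ne_zero) (by positivity)
      (pow_lt_pow_right_of_lt_one₀ norm_one_add_pos (norm_one_add_lt_one h2 hz) two_lt_ordProj)
  rw [scaledBinSum_four_mul_add_four hz1 hz2, add_comm, norm_add_eq_left_of_lt dominated,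
    norm_main]

theorem norm_scaledBinSum (h2 : ‖(2 : K)‖ < 1) {s : ℕ} {z : K} (hz : z ^ 2 ^ (s + 1) = -1)
    {r : ℕ} (hr : Even r) (hr0 : r ≠ 0) (hrs : r < 2 ^ (s + 1)) :
    ‖scaledBinSum z r‖ = ‖(2 : K)‖ / ‖1 + z‖ ^ ordProj[2] r := by
  induction s generalizing z r with
  | zero =>
    obtain ⟨m, rfl⟩ := hr
    omega
  | succ s ih =>
    have hz2 : (z ^ 2) ^ 2 ^ (s + 1) = -1 := by rwa [sq_pow_two_pow]
    have two_pow_eq : 2 ^ (s + 2) = 2 * 2 ^ (s + 1) := pow_succ' 2 (s + 1)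
    have half {i : ℕ} (hi : 2 * i + 2 < 2 ^ (s + 1)) : ‖scaledBinSum (z ^ 2) (2 * i + 2)‖ =
        ‖(2 : K)‖ / ‖1 + z ^ 2‖ ^ ordProj[2] (2 * i + 2) :=
      ih hz2 (even_two_mul (i + 1)) (Nat.succ_ne_zero _) hi
    have half_lt_one {i : ℕ} (hi : 2 * i + 2 < 2 ^ (s + 1)) :
        ‖scaledBinSum (z ^ 2) (2 * i + 2)‖ < 1 := by
      have norm_pos : 0 < ‖1 + z ^ 2‖ := norm_pos_iff.2 (one_add_ne_zero_of_pow_two_pow hz2)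
      rw [half hi, div_lt_one (by positivity)]
      exact norm_two_lt_norm_one_add_pow h2 hz2
        ((Nat.ordProj_le 2 (Nat.succ_ne_zero _)).trans_lt hi)
    have odd {t : ℕ} (ht : 4 * t + 2 < 2 ^ (s + 2)) :
        ‖scaledBinSum z (4 * t + 2)‖ = ‖(2 : K)‖ / ‖1 + z‖ ^ 2 :=
      norm_scaledBinSum_four_mul_add_two h2 hz fun i hi => half_lt_one (by omega)
    obtain ⟨t, rfl | rfl⟩ : ∃ t, r = 4 * t + 2 ∨ r = 4 * t + 4 := by
      obtain ⟨m, rfl⟩ := hr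
      exact ⟨(m - 1) / 2, by omega⟩
    · rw [odd hrs, ordProj_four_mul_add_two]
    · exact norm_scaledBinSum_four_mul_add_four h2 hz (odd (by omega)) (half (by omega))

theorem binSum_ne_zero (h2 : ‖(2 : K)‖ < 1) {s : ℕ} {z : K} (hz : z ^ 2 ^ s = -1) {r : ℕ}
    (hrs : r < 2 ^ s) : binSum z r ≠ 0 := by
  obtain rfl | hr0 := eq_or_ne r 0
  · simp [binSum_zero]
  obtain ⟨s, rfl⟩ : ∃ t, s = t + 1 := Nat.exists_eq_succ_of_ne_zero (by rintro rfl; omega)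
  have hz1 : 1 + z ≠ 0 := one_add_ne_zero_of_pow_two_pow hz
  have even_ne_zero {m : ℕ} (hm : 2 * m < 2 ^ (s + 1)) : scaledBinSum z (2 * m) ≠ 0 := by
    obtain rfl | hm0 := eq_or_ne m 0
    · simp [scaledBinSum_zero]
    · rw [← norm_ne_zero_iff, norm_scaledBinSum h2 hz (even_two_mul m) (by omega) hm]
      exact div_ne_zero (norm_ne_zero_iff.2 two_ne_zero)
        (pow_ne_zero _ (norm_ne_zero_iff.2 hz1))
  refine right_ne_zero_of_mul (a := (1 + z) ^ r) (?_ : scaledBinSum z r ≠ 0)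
  obtain ⟨m, rfl | rfl⟩ := r.even_or_odd'
  · exact even_ne_zero hrs
  · rw [scaledBinSum_two_mul_add_one hz1]
    exact even_ne_zero (by omega)

end Norm

/-- The exponents `k` with `2 ^ k ≤ n`, which index the product defining `hB n`. -/
def binExponents (n : ℕ) : Finset ℕ :=
  (range (n + 1)).filter fun k => 2 ^ k ≤ n

theorem mem_binExponents {n k : ℕ} : k ∈ binExponents n ↔ 2 ^ k ≤ n := by
  have : k < 2 ^ k := k.lt_two_pow_self
  rw [binExponents, mem_filter, mem_range]
  omega

/-- The value of `hB n` at `z`, as a function of the multiset of parts. -/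
def hBEval {R : Type*} [CommRing R] (z : R) (n : ℕ) (M : Multiset ℕ) : R :=
  ∏ k ∈ binExponents n, (1 + z ^ 2 ^ k) ^ (n / 2 ^ k - M.count (2 ^ k))

theorem aeval_hB {R : Type*} [CommRing R] (z : R) (n : ℕ) (μ : Nat.Partition n) :
    aeval z (hB n μ) = hBEval z n μ.parts := by
  simp [hB, hBEval, binExponents]

theorem hBEval_eq_zero {R : Type*} [CommRing R] {z : R} {n s : ℕ} (hs : 2 ^ s ≤ n)
    (hz : 1 + z ^ 2 ^ s = 0) {M : Multiset ℕ} (hM : M.count (2 ^ s) < n / 2 ^ s) :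
    hBEval z n M = 0 := by
  refine prod_eq_zero (mem_binExponents.2 hs) ?_
  rw [hz, zero_pow (Nat.sub_ne_zero_of_lt hM)]

section Evaluation

variable {K : Type*} [Field K]

theorem reciprocalWeight_eq_prod (z : K) {T : Finset ℕ} {M : Multiset ℕ}
    (hT : ∀ i ∈ M, ∃ k ∈ T, i = 2 ^ k) :
    reciprocalWeight z M = ∏ k ∈ T, ((1 + z ^ 2 ^ k) ^ M.count (2 ^ k))⁻¹ := by
  have subset_image : M.toFinset ⊆ T.image (2 ^ ·) := fun i hi => by
    obtain ⟨k, hk, rfl⟩ := hT i (Multiset.mem_toFinset.1 hi)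
    exact mem_image_of_mem _ hk
  rw [reciprocalWeight, prod_multiset_map_count, prod_subset subset_image, prod_image]
  · simp
  · exact fun _ _ _ _ h => Nat.pow_right_injective le_rfl h
  · intro i _ hi
    rw [Multiset.count_eq_zero.2 (mt Multiset.mem_toFinset.2 hi), pow_zero]

theorem hBEval_add_replicate {z : K} {n s : ℕ} (hs : 2 ^ s ≤ n)
    (hz : ∀ k ≠ s, 1 + z ^ 2 ^ k ≠ 0) {M : Multiset ℕ} (hM : M ∈ binMultisets (n % 2 ^ s)) :
    hBEval z n (M + Multiset.replicate (n / 2 ^ s) (2 ^ s)) =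
      (∏ k ∈ (binExponents n).erase s, (1 + z ^ 2 ^ k) ^ (n / 2 ^ k)) * reciprocalWeight z M := by
  have mod_lt : n % 2 ^ s < 2 ^ s := Nat.mod_lt n (Nat.two_pow_pos s)
  have exponent_mem : ∀ i ∈ M, ∃ k ∈ (binExponents n).erase s, i = 2 ^ k := by
    intro i hi
    obtain ⟨k, rfl⟩ := (mem_binMultisets.1 hM).2 i hi
    have part_le : 2 ^ k ≤ n % 2 ^ s := (mem_binMultisets.1 hM).1 ▸ Multiset.le_sum_of_mem hi
    refine ⟨k, mem_erase.2 ⟨?_, mem_binExponents.2 (part_le.trans (Nat.mod_le _ _))⟩, rfl⟩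
    rintro rfl
    omega
  rw [reciprocalWeight_eq_prod z exponent_mem, hBEval,
    ← mul_prod_erase _ _ (mem_binExponents.2 hs), ← prod_mul_distrib, Multiset.count_add,
    Multiset.count_replicate_self, Nat.sub_eq_zero_of_le (Nat.le_add_left _ _), pow_zero, one_mul]
  refine prod_congr rfl fun k hk => ?_
  have hks : k ≠ s := ne_of_mem_erase hk
  have two_pow_ne : 2 ^ s ≠ 2 ^ k := fun h => hks (Nat.pow_right_injective le_rfl h).symm
  have count_le : M.count (2 ^ k) ≤ n / 2 ^ k :=
    (count_two_pow_le_div hM).trans (Nat.div_le_div_right (Nat.mod_le _ _))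
  rw [Multiset.count_add, Multiset.count_replicate, if_neg two_pow_ne, add_zero,
    pow_sub₀ _ (hz k hks) count_le]

theorem aeval_sum_hB {z : K} {n s : ℕ} (hs : 2 ^ s ≤ n) (hzs : 1 + z ^ 2 ^ s = 0)
    (hz : ∀ k ≠ s, 1 + z ^ 2 ^ k ≠ 0) :
    aeval z (∑ μ ∈ binParts n, hB n μ) =
      (∏ k ∈ (binExponents n).erase s, (1 + z ^ 2 ^ k) ^ (n / 2 ^ k)) *
        binSum z (n % 2 ^ s) := by
  have filter_full : ∑ M ∈ binMultisets n with n / 2 ^ s ≤ M.count (2 ^ s), hBEval z n M =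
      ∑ M ∈ binMultisets (n % 2 ^ s),
        hBEval z n (M + Multiset.replicate (n / 2 ^ s) (2 ^ s)) := by
    rw [← sum_binMultisets_filter_le_count, Nat.mod_add_div']
  calc aeval z (∑ μ ∈ binParts n, hB n μ)
      = ∑ M ∈ binMultisets n, hBEval z n M := by
        simp only [map_sum, aeval_hB, sum_binParts_eq_sum_binMultisets n (hBEval z n)]
    _ = ∑ M ∈ binMultisets n with n / 2 ^ s ≤ M.count (2 ^ s), hBEval z n M :=
        Eq.symm <| sum_filter_of_ne fun M _ hne => by
          contrapose! hne
          exact hBEval_eq_zero hs hzs hne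
    _ = _ := by
        rw [filter_full, binSum, mul_sum]
        exact sum_congr rfl fun M hM => hBEval_add_replicate hs hz hM

end Evaluation

theorem aeval_sum_hB_ne_zero {K : Type*} [NormedField K] [IsUltrametricDist K] [NeZero (2 : K)]
    (h2 : ‖(2 : K)‖ < 1) {z : K} {n s : ℕ} (hs : 2 ^ s ≤ n) (hz : z ^ 2 ^ s = -1) :
    aeval z (∑ μ ∈ binParts n, hB n μ) ≠ 0 := by
  have hzk : ∀ k ≠ s, 1 + z ^ 2 ^ k ≠ 0 := fun k hk => one_add_pow_two_pow_ne_zero hz hk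
  rw [aeval_sum_hB hs (by rw [hz, add_neg_cancel]) hzk]
  exact mul_ne_zero
    (prod_ne_zero_iff.2 fun k hk => pow_ne_zero _ (hzk k (ne_of_mem_erase hk)))
    (binSum_ne_zero h2 hz (Nat.mod_lt n (Nat.two_pow_pos s)))

theorem norm_natCast_padicAlgCl_lt_one (p : ℕ) [Fact p.Prime] : ‖(p : PadicAlgCl p)‖ < 1 := by
  rw [← map_natCast (algebraMap ℚ_[p] (PadicAlgCl p)), PadicAlgCl.norm_extends]
  exact Padic.norm_p_lt_one

/-- For every `n ≥ 2` and every `s ≥ 0` with `2^s ≤ n`, the polynomial `1 + x^{2^s}`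
does not divide `num_B(n,x)` in `ℤ[x]`. -/
theorem one_add_X_pow_not_dvd_numB (n s : ℕ) (hn : 2 ≤ n) (hs : 2 ^ s ≤ n) :
    ¬ ((1 + X ^ (2 ^ s) : Polynomial ℤ) ∣ numB n) := by
  intro hdvd
  have hdvd_sum : (1 + X ^ (2 ^ s) : Polynomial ℤ) ∣ ∑ μ ∈ binParts n, hB n μ :=
    (GB_dvd_sum n).choose_spec ▸ hdvd.mul_left (GB n)
  obtain ⟨z, hz⟩ : ∃ z : PadicAlgCl 2, z ^ 2 ^ s = -1 :=
    IsAlgClosed.exists_pow_nat_eq _ (Nat.two_pow_pos s)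
  have hroot : aeval z (1 + X ^ (2 ^ s) : Polynomial ℤ) = 0 := by simp [hz]
  have norm_two_lt : ‖(2 : PadicAlgCl 2)‖ < 1 := mod_cast norm_natCast_padicAlgCl_lt_one 2
  exact aeval_sum_hB_ne_zero norm_two_lt hs hz
    (aeval_eq_zero_of_dvd_aeval_eq_zero hdvd_sum hroot)
end

section
/- For every integer n ≥ 1, the evaluation of the odd-partition numerator at x = −1 satisfies num_O(n,−1) = o(n!), where o(M) denotes the largest odd divisor of the positive integer M. -/
open Polynomial Finset
open scoped Classical

/-- The odd partitions of `n`: partitions of `n` all of whose parts are odd. -/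
noncomputable def oddParts (n : ℕ) : Finset (Nat.Partition n) :=
  Finset.univ.filter (fun μ => ∀ i ∈ μ.parts, Odd i)

/-- `h_{O,λ}(x) = ∏_{i odd, 1 ≤ i ≤ n} (1+x^i)^(⌊n/i⌋ - m_λ(i))` in `ℤ[x]`. -/
noncomputable def hO (n : ℕ) (μ : Nat.Partition n) : Polynomial ℤ :=
  ∏ i ∈ (Finset.Icc 1 n).filter (fun i => Odd i),
    (1 + X ^ i) ^ (n / i - μ.parts.count i)

/-- `G_O(n,x)`: the (normalized) gcd of the `h_{O,λ}(x)` over odd partitions `λ` of `n`. -/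
noncomputable def GO (n : ℕ) : Polynomial ℤ :=
  (oddParts n).gcd (hO n)

theorem GO_dvd_sum (n : ℕ) :
    ∃ q : Polynomial ℤ, (∑ μ ∈ oddParts n, hO n μ) = GO n * q :=
  exists_eq_mul_right_of_dvd (Finset.dvd_sum fun _ hμ => Finset.gcd_dvd hμ)

/-- `num_O(n,x) = (∑_{λ odd partition of n} h_{O,λ}(x)) / G_O(n,x)`. -/
noncomputable def numO (n : ℕ) : Polynomial ℤ :=
  (GO_dvd_sum n).choose

/-!
Write `Φ_k` for the `k`-th cyclotomic polynomial. For odd `i` we have `1 + x^i = ∏_{d ∣ i} Φ_{2d}`,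
so the exponent of `Φ_{2d}` in `h_{O,λ}` is `∑_{d ∣ i} ⌊n/i⌋ - c_d(λ)`, where `c_d(λ) ≤ ⌊n/d⌋`
counts the parts of `λ` divisible by `d`. Equality holds for `λ = d^⌊n/d⌋ 1^(n mod d)`, and distinct
cyclotomic polynomials are coprime, so `num_O = ∑_λ ∏_d Φ_{2d}^(⌊n/d⌋ - c_d(λ))`. At `x = -1` the
factor `Φ_2 = 1 + x` kills every term but `λ = 1^n`, whose value is
`∏_{d ≠ 1} Φ_{2d}(-1)^⌊n/d⌋ = ∏_{j ≤ n} ∏_{1 ≠ d ∣ o(j)} Φ_{2d}(-1) = ∏_{j ≤ n} o(j) = o(n!)`.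
-/

section Cyclotomic

variable (R : Type*) [CommRing R]

theorem prod_cyclotomic_two_mul_mul_prod_cyclotomic {s : Finset ℕ} (hs : ∀ d ∈ s, Odd d) :
    (∏ d ∈ s, cyclotomic (2 * d) R) * ∏ d ∈ s, cyclotomic d R =
      expand R 2 (∏ d ∈ s, cyclotomic d R) := by
  rw [← prod_mul_distrib, map_prod]
  refine prod_congr rfl fun d hd => ?_
  rw [cyclotomic_expand_eq_cyclotomic_mul Nat.prime_two (hs d hd).not_two_dvd_nat, mul_comm d]

theorem prod_divisors_cyclotomic_two_mul {m : ℕ} (hm : Odd m) :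
    ∏ d ∈ m.divisors, cyclotomic (2 * d) R = 1 + X ^ m := by
  have hodd : ∀ d ∈ m.divisors, Odd d := fun d hd => hm.of_dvd_nat (Nat.dvd_of_mem_divisors hd)
  have hreg : IsRightRegular (X ^ m - 1 : R[X]) := by
    simpa using (monic_X_pow_sub_C (1 : R) hm.pos.ne').isRegular.right
  apply hreg
  have h := prod_cyclotomic_two_mul_mul_prod_cyclotomic R hodd
  rw [prod_cyclotomic_eq_X_pow_sub_one hm.pos] at h
  simp only [h, map_sub, map_pow, expand_X, map_one]
  ring

theorem prod_eval_neg_one_cyclotomic_two_mul {m : ℕ} (hm : Odd m) :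
    ∏ d ∈ m.divisors.erase 1, eval (-1) (cyclotomic (2 * d) R) = m := by
  have hodd : ∀ d ∈ m.divisors.erase 1, Odd d := fun d hd =>
    hm.of_dvd_nat (Nat.dvd_of_mem_divisors (mem_of_mem_erase hd))
  have h := congrArg (eval (-1)) (prod_cyclotomic_two_mul_mul_prod_cyclotomic R hodd)
  rw [prod_cyclotomic_eq_geom_sum hm.pos, eval_mul, expand_eval, eval_prod] at h
  simpa [eval_finsetSum, neg_one_geom_sum, Nat.not_even_iff_odd.2 hm] using h

end Cyclotomic

theorem isRelPrime_cyclotomic {m n : ℕ} (hmn : m ≠ n) :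
    IsRelPrime (cyclotomic m ℤ) (cyclotomic n ℤ) := by
  rcases m.eq_zero_or_pos with rfl | hm
  · simpa only [cyclotomic_zero] using isRelPrime_one_left
  rcases n.eq_zero_or_pos with rfl | hn
  · simpa only [cyclotomic_zero] using isRelPrime_one_right
  rw [(cyclotomic.irreducible hm).isRelPrime_iff_not_dvd]
  intro hdvd
  have hassoc := (cyclotomic.irreducible hm).associated_of_dvd (cyclotomic.irreducible hn) hdvd
  exact hmn <| cyclotomic_injective <|
    eq_of_monic_of_associated (cyclotomic.monic m ℤ) (cyclotomic.monic n ℤ) hassoc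

theorem isUnit_of_forall_dvd_prod_pow {ι κ M : Type*} [CommMonoid M] [DecompositionMonoid M]
    {s : Finset κ} {t : Set ι} (ht : t.Nonempty) {p : κ → M}
    (hp : (s : Set κ).Pairwise (Function.onFun IsRelPrime p)) {e : ι → κ → ℕ}
    (he : ∀ k ∈ s, ∃ i ∈ t, e i k = 0) {a : M} (ha : ∀ i ∈ t, a ∣ ∏ k ∈ s, p k ^ e i k) :
    IsUnit a := by
  have hcop : ∀ k ∈ s, IsRelPrime a (p k) := by
    intro k hk
    obtain ⟨i, hi, hik⟩ := he k hk
    refine IsRelPrime.of_dvd_left (.prod_left fun l hl => ?_) (ha i hi)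
    rcases eq_or_ne l k with rfl | hlk
    · simpa only [hik, pow_zero] using isRelPrime_one_left
    · exact (hp hl hk hlk).pow_left
  obtain ⟨i, hi⟩ := ht
  exact (IsRelPrime.prod_right fun k hk => (hcop k hk).pow_right).isUnit_of_dvd (ha i hi)

theorem prod_pow_prod_filter_comm {ι κ M : Type*} [CommMonoid M] (s : Finset ι) (t : Finset κ)
    (r : κ → ι → Prop) [∀ k i, Decidable (r k i)] (f : κ → M) (e : ι → ℕ) :
    ∏ i ∈ s, (∏ k ∈ t with r k i, f k) ^ e i = ∏ k ∈ t, f k ^ ∑ i ∈ s with r k i, e i := by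
  simp only [← prod_pow, ← prod_pow_eq_pow_sum]
  exact prod_comm' fun i k => by simp only [mem_filter]; tauto

theorem odd_ordCompl_two {n : ℕ} (hn : n ≠ 0) : Odd (ordCompl[2] n) := by
  rw [← Nat.not_even_iff_odd, even_iff_two_dvd]
  exact Nat.not_dvd_ordCompl Nat.prime_two hn

theorem prod_Ioc_ordCompl (n p : ℕ) :
    ∏ j ∈ Ioc 0 n, ordCompl[p] j = ordCompl[p] n.factorial := by
  induction n with
  | zero => simp
  | succ n ih =>
    rw [prod_Ioc_succ_top n.zero_le, ih, Nat.factorial_succ, Nat.ordCompl_mul, mul_comm]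

theorem sum_count_filter_eq_countP {α : Type*} [DecidableEq α] {s : Finset α} {m : Multiset α}
    (hm : ∀ a ∈ m, a ∈ s) (p : α → Prop) [DecidablePred p] :
    ∑ a ∈ s with p a, m.count a = m.countP p := by
  have hmem : ∀ a ∈ m.filter p, a ∈ s.filter p := fun a ha =>
    mem_filter.2 ⟨hm a (Multiset.mem_of_mem_filter ha), Multiset.of_mem_filter ha⟩
  rw [Multiset.countP_eq_card_filter, ← Multiset.sum_count_eq_card hmem]
  exact sum_congr rfl fun a ha => (Multiset.count_filter_of_pos (mem_filter.1 ha).2).symm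

theorem countP_dvd_mul_le_sum {m : Multiset ℕ} (hm : ∀ a ∈ m, 0 < a) (d : ℕ) :
    m.countP (d ∣ ·) * d ≤ m.sum := by
  have hle : ∀ a ∈ m.filter (d ∣ ·), d ≤ a := fun a ha =>
    Nat.le_of_dvd (hm a (Multiset.mem_of_mem_filter ha)) (Multiset.of_mem_filter ha)
  calc m.countP (d ∣ ·) * d = (m.filter (d ∣ ·)).card • d := by
        rw [Multiset.countP_eq_card_filter, smul_eq_mul]
    _ ≤ (m.filter (d ∣ ·)).sum := Multiset.card_nsmul_le_sum hle
    _ ≤ m.sum := by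
        rw [← Multiset.sum_filter_add_sum_filter_not (s := m) (d ∣ ·)]
        exact Nat.le_add_right _ _

theorem card_le_sum_of_pos {m : Multiset ℕ} (hm : ∀ a ∈ m, 0 < a) : m.card ≤ m.sum := by
  simpa using Multiset.card_nsmul_le_sum hm

theorem eq_one_of_mem_of_sum_le_card {m : Multiset ℕ} (hm : ∀ a ∈ m, 0 < a)
    (hsum : m.sum ≤ m.card) : ∀ a ∈ m, a = 1 := by
  intro a ha
  obtain ⟨t, rfl⟩ := Multiset.exists_cons_of_mem ha
  have hpos : 0 < a := hm a ha
  have ht : t.card ≤ t.sum := card_le_sum_of_pos fun b hb => hm b (Multiset.mem_cons_of_mem hb)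
  rw [Multiset.sum_cons, Multiset.card_cons] at hsum
  lia

section Partition

variable {n : ℕ}

theorem countP_dvd_parts_le_div (μ : n.Partition) {d : ℕ} (hd : 0 < d) :
    μ.parts.countP (d ∣ ·) ≤ n / d := by
  rw [Nat.le_div_iff_mul_le hd]
  exact (countP_dvd_mul_le_sum (fun _ => μ.parts_pos) d).trans_eq μ.parts_sum

theorem count_parts_le_div (μ : n.Partition) {i : ℕ} (hi : 0 < i) : μ.parts.count i ≤ n / i := by
  refine le_trans ?_ (countP_dvd_parts_le_div μ hi)
  rw [← Multiset.count_filter_of_pos (p := (i ∣ ·)) dvd_rfl, Multiset.countP_eq_card_filter]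
  exact Multiset.count_le_card _ _

/-- The partition `d^⌊n/d⌋ 1^(n mod d)` of `n`, which has as many parts divisible by `d` as a
partition of `n` can have. For `d = 1` it is the partition `1^n`. -/
def blockPartition (n : ℕ) {d : ℕ} (hd : 0 < d) : n.Partition where
  parts := Multiset.replicate (n / d) d + Multiset.replicate (n % d) 1
  parts_pos hi := by
    rcases Multiset.mem_add.1 hi with hi | hi <;> rw [Multiset.eq_of_mem_replicate hi]
    · exact hd
    · exact one_pos
  parts_sum := by simp [Nat.div_add_mod']

theorem blockPartition_mem_oddParts {d : ℕ} (hd : Odd d) :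
    blockPartition n hd.pos ∈ oddParts n := by
  refine mem_filter.2 ⟨mem_univ _, fun i hi => ?_⟩
  rcases Multiset.mem_add.1 hi with hi | hi <;> rw [Multiset.eq_of_mem_replicate hi]
  · exact hd
  · exact odd_one

theorem countP_dvd_blockPartition {d : ℕ} (hd : 0 < d) :
    (blockPartition n hd).parts.countP (d ∣ ·) = n / d := by
  refine (countP_dvd_parts_le_div _ hd).antisymm ?_
  have hall : (Multiset.replicate (n / d) d).countP (d ∣ ·) = n / d := by
    rw [Multiset.countP_eq_card.2 fun a ha => (Multiset.eq_of_mem_replicate ha).symm.dvd,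
      Multiset.card_replicate]
  calc n / d = (Multiset.replicate (n / d) d).countP (d ∣ ·) := hall.symm
    _ ≤ (blockPartition n hd).parts.countP (d ∣ ·) :=
        Multiset.countP_le_of_le _ (Multiset.le_add_right _ _)

theorem blockPartition_one_parts : (blockPartition n one_pos).parts = Multiset.replicate n 1 := by
  simp [blockPartition, Nat.mod_one]

theorem countP_dvd_blockPartition_one {d : ℕ} (hd : d ≠ 1) :
    (blockPartition n one_pos).parts.countP (d ∣ ·) = 0 := by
  rw [blockPartition_one_parts, Multiset.countP_eq_zero]
  intro a ha
  rwa [Multiset.eq_of_mem_replicate ha, Nat.dvd_one]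

theorem card_parts_lt_of_ne_blockPartition_one {μ : n.Partition}
    (hμ : μ ≠ blockPartition n one_pos) : μ.parts.card < n := by
  by_contra! hcard
  have hones : ∀ a ∈ μ.parts, a = 1 :=
    eq_one_of_mem_of_sum_le_card (fun _ => μ.parts_pos) (μ.parts_sum.trans_le hcard)
  have hcard_eq : μ.parts.card = n :=
    ((card_le_sum_of_pos fun _ => μ.parts_pos).trans_eq μ.parts_sum).antisymm hcard
  apply hμ
  ext1
  rw [blockPartition_one_parts, Multiset.eq_replicate]
  exact ⟨hcard_eq, hones⟩

end Partition

/-- The odd numbers in `[1, n]`: the possible parts of an odd partition of `n`, and the `d` for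
which `Φ_{2d}` may occur in `h_{O,λ}`. -/
abbrev oddsUpTo (n : ℕ) : Finset ℕ := (Finset.Icc 1 n).filter (fun i => Odd i)

section OddParts

variable {n : ℕ}

theorem mem_oddsUpTo_of_mem_parts {μ : n.Partition} (hμ : μ ∈ oddParts n) {i : ℕ}
    (hi : i ∈ μ.parts) : i ∈ oddsUpTo n :=
  mem_filter.2 ⟨mem_Icc.2 ⟨μ.parts_pos hi, μ.le_of_mem_parts hi⟩, (mem_filter.1 hμ).2 i hi⟩

theorem oddsUpTo_filter_dvd {j : ℕ} (hj : 0 < j) (hjn : j ≤ n) :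
    {d ∈ oddsUpTo n | d ∣ j} = (ordCompl[2] j).divisors := by
  have hodd : Odd (ordCompl[2] j) := odd_ordCompl_two hj.ne'
  ext d
  simp only [mem_filter, mem_Icc, Nat.mem_divisors]
  constructor
  · rintro ⟨⟨-, hd⟩, hdj⟩
    exact ⟨Nat.dvd_ordCompl_of_dvd_not_dvd hdj hd.not_two_dvd_nat, hodd.pos.ne'⟩
  · rintro ⟨hd, -⟩
    have hdj : d ∣ j := hd.trans (Nat.ordCompl_dvd j 2)
    exact ⟨⟨⟨Nat.pos_of_dvd_of_pos hdj hj, (Nat.le_of_dvd hj hdj).trans hjn⟩,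
      hodd.of_dvd_nat hd⟩, hdj⟩

theorem one_add_X_pow_eq_prod_cyclotomic {i : ℕ} (hi : i ∈ oddsUpTo n) :
    (1 + X ^ i : ℤ[X]) = ∏ d ∈ oddsUpTo n with d ∣ i, cyclotomic (2 * d) ℤ := by
  obtain ⟨hin, hodd⟩ := mem_filter.1 hi
  have hcompl : ordCompl[2] i = i :=
    (Nat.ordCompl_eq_self_iff_zero_or_not_dvd i Nat.prime_two).2 (.inr hodd.not_two_dvd_nat)
  rw [oddsUpTo_filter_dvd hodd.pos (mem_Icc.1 hin).2, hcompl,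
    prod_divisors_cyclotomic_two_mul ℤ hodd]

/-- The cyclotomic factorization of `G_O(n,x)`. The exponent of `Φ_{2d}` is the sum of `⌊n/i⌋` over
the proper odd multiples `i ≤ n` of `d`. -/
noncomputable def cyclotomicGO (n : ℕ) : ℤ[X] :=
  ∏ d ∈ oddsUpTo n, cyclotomic (2 * d) ℤ ^ ∑ i ∈ {i ∈ oddsUpTo n | d ∣ i}.erase d, n / i

/-- The cofactor `h_{O,λ} / G_O(n,x)`. The exponent of `Φ_{2d}` is `⌊n/d⌋` minus the number of parts
of `λ` divisible by `d`. -/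
noncomputable def cofactorHO (μ : n.Partition) : ℤ[X] :=
  ∏ d ∈ oddsUpTo n, cyclotomic (2 * d) ℤ ^ (n / d - μ.parts.countP (d ∣ ·))

theorem sum_div_sub_count {μ : n.Partition} (hμ : μ ∈ oddParts n) {d : ℕ} (hd : d ∈ oddsUpTo n) :
    ∑ i ∈ oddsUpTo n with d ∣ i, (n / i - μ.parts.count i) =
      ∑ i ∈ {i ∈ oddsUpTo n | d ∣ i}.erase d, n / i + (n / d - μ.parts.countP (d ∣ ·)) := by
  have hcount : ∀ i ∈ {i ∈ oddsUpTo n | d ∣ i}, μ.parts.count i ≤ n / i := fun i hi =>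
    count_parts_le_div μ (mem_filter.1 (mem_filter.1 hi).1).2.pos
  rw [sum_tsub_distrib _ hcount, sum_count_filter_eq_countP fun _ => mem_oddsUpTo_of_mem_parts hμ,
    ← sum_erase_add _ _ (mem_filter.2 ⟨hd, dvd_rfl⟩)]
  exact Nat.add_sub_assoc (countP_dvd_parts_le_div μ (mem_filter.1 hd).2.pos) _

theorem hO_eq_cyclotomicGO_mul_cofactorHO {μ : n.Partition} (hμ : μ ∈ oddParts n) :
    hO n μ = cyclotomicGO n * cofactorHO μ := by
  calc hO n μ
      = ∏ i ∈ oddsUpTo n, (∏ d ∈ oddsUpTo n with d ∣ i, cyclotomic (2 * d) ℤ) ^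
          (n / i - μ.parts.count i) :=
        prod_congr rfl fun i hi => by rw [one_add_X_pow_eq_prod_cyclotomic hi]
    _ = ∏ d ∈ oddsUpTo n, cyclotomic (2 * d) ℤ ^
          ∑ i ∈ oddsUpTo n with d ∣ i, (n / i - μ.parts.count i) :=
        prod_pow_prod_filter_comm _ _ (· ∣ ·) _ _
    _ = cyclotomicGO n * cofactorHO μ := by
        rw [cyclotomicGO, cofactorHO, ← prod_mul_distrib]
        exact prod_congr rfl fun d hd => by rw [sum_div_sub_count hμ hd, pow_add]

theorem monic_cyclotomicGO (n : ℕ) : (cyclotomicGO n).Monic :=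
  monic_prod_of_monic _ _ fun _ _ => (cyclotomic.monic _ ℤ).pow _

theorem isUnit_gcd_cofactorHO (n : ℕ) :
    IsUnit ((oddParts n).gcd fun μ => cofactorHO μ) := by
  refine isUnit_of_forall_dvd_prod_pow (t := (oddParts n : Set n.Partition))
    ⟨_, blockPartition_mem_oddParts odd_one⟩ (fun d _ d' _ hne => ?_) (fun d hd => ?_)
    fun μ hμ => gcd_dvd hμ
  · exact isRelPrime_cyclotomic (by lia)
  · have hodd := (mem_filter.1 hd).2
    exact ⟨_, blockPartition_mem_oddParts hodd, by
      rw [countP_dvd_blockPartition hodd.pos, Nat.sub_self]⟩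

theorem GO_eq_cyclotomicGO (n : ℕ) : GO n = cyclotomicGO n := by
  have hassoc : Associated (GO n) (cyclotomicGO n) := by
    rw [GO, gcd_congr rfl fun μ hμ => hO_eq_cyclotomicGO_mul_cofactorHO hμ]
    exact (Finset.gcd_mul_left' _ _ _).trans
      (associated_mul_unit_left _ _ (isUnit_gcd_cofactorHO n))
  rw [← (monic_cyclotomicGO n).normalize_eq_self,
    ← normalize_eq_normalize_iff_associated.2 hassoc, GO, Finset.normalize_gcd]

theorem numO_eq_sum_cofactorHO (n : ℕ) : numO n = ∑ μ ∈ oddParts n, cofactorHO μ := by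
  have hnumO : ∑ μ ∈ oddParts n, hO n μ = GO n * numO n := (GO_dvd_sum n).choose_spec
  apply mul_left_cancel₀ (monic_cyclotomicGO n).ne_zero
  rw [← GO_eq_cyclotomicGO, ← hnumO, GO_eq_cyclotomicGO, mul_sum]
  exact sum_congr rfl fun μ hμ => hO_eq_cyclotomicGO_mul_cofactorHO hμ

theorem eval_neg_one_cofactorHO_of_ne {μ : n.Partition} (hμ : μ ≠ blockPartition n one_pos) :
    eval (-1) (cofactorHO μ) = 0 := by
  have hcard := card_parts_lt_of_ne_blockPartition_one hμ
  have hone : 1 ∈ oddsUpTo n := mem_filter.2 ⟨mem_Icc.2 ⟨le_rfl, by lia⟩, odd_one⟩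
  have hexp : n / 1 - μ.parts.countP (1 ∣ ·) ≠ 0 := by
    rw [Multiset.countP_eq_card.2 fun a _ => one_dvd a, Nat.div_one]
    lia
  rw [cofactorHO, eval_prod]
  refine prod_eq_zero hone ?_
  rw [eval_pow, mul_one, cyclotomic_two, eval_add, eval_X, eval_one, neg_add_cancel, zero_pow hexp]

theorem eval_neg_one_cofactorHO_blockPartition_one (n : ℕ) :
    eval (-1) (cofactorHO (blockPartition n one_pos)) =
      ∏ d ∈ (oddsUpTo n).erase 1, eval (-1) (cyclotomic (2 * d) ℤ) ^ (n / d) := by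
  rw [cofactorHO, eval_prod, ← prod_erase (a := 1) (oddsUpTo n)]
  · refine prod_congr rfl fun d hd => ?_
    rw [countP_dvd_blockPartition_one (ne_of_mem_erase hd), Nat.sub_zero, eval_pow]
  · rw [countP_dvd_blockPartition, Nat.sub_self, pow_zero, eval_one]

theorem prod_eval_neg_one_cyclotomic_pow_div (n : ℕ) :
    ∏ d ∈ (oddsUpTo n).erase 1, eval (-1) (cyclotomic (2 * d) ℤ) ^ (n / d) =
      ((ordCompl[2] n.factorial : ℕ) : ℤ) := by
  have hinner : ∀ j ∈ Ioc 0 n,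
      ∏ d ∈ (oddsUpTo n).erase 1 with d ∣ j, eval (-1) (cyclotomic (2 * d) ℤ) =
        ((ordCompl[2] j : ℕ) : ℤ) := by
    intro j hj
    obtain ⟨hj0, hjn⟩ := mem_Ioc.1 hj
    rw [filter_erase, oddsUpTo_filter_dvd hj0 hjn,
      prod_eval_neg_one_cyclotomic_two_mul ℤ (odd_ordCompl_two hj0.ne')]
  calc ∏ d ∈ (oddsUpTo n).erase 1, eval (-1) (cyclotomic (2 * d) ℤ) ^ (n / d)
      = ∏ d ∈ (oddsUpTo n).erase 1, eval (-1) (cyclotomic (2 * d) ℤ) ^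
          ∑ j ∈ Ioc 0 n with d ∣ j, 1 := by
        simp only [← card_eq_sum_ones, Nat.Ioc_filter_dvd_card_eq_div]
    _ = ∏ j ∈ Ioc 0 n,
          ∏ d ∈ (oddsUpTo n).erase 1 with d ∣ j, eval (-1) (cyclotomic (2 * d) ℤ) := by
        simp only [← prod_pow_prod_filter_comm, pow_one]
    _ = ((ordCompl[2] n.factorial : ℕ) : ℤ) := by
        rw [prod_congr rfl hinner, ← Nat.cast_prod, prod_Ioc_ordCompl]

end OddParts

/-- For every integer `n ≥ 1`, the evaluation of the odd-partition numerator at `x = −1`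
satisfies `num_O(n,−1) = o(n!)`, where `o(M) = M / 2^{v₂(M)}` denotes the largest odd
divisor of the positive integer `M`. -/
theorem numO_eval_neg_one (n : ℕ) (hn : 1 ≤ n) :
    Polynomial.eval (-1 : ℤ) (numO n) = (ordCompl[2] (Nat.factorial n) : ℤ) := by
  rw [numO_eq_sum_cofactorHO, eval_finsetSum]
  calc ∑ μ ∈ oddParts n, eval (-1) (cofactorHO μ)
      = eval (-1) (cofactorHO (blockPartition n one_pos)) :=
        sum_eq_single_of_mem _ (blockPartition_mem_oddParts odd_one)
          fun μ _ hμ => eval_neg_one_cofactorHO_of_ne hμ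
    _ = ∏ d ∈ (oddsUpTo n).erase 1, eval (-1) (cyclotomic (2 * d) ℤ) ^ (n / d) :=
        eval_neg_one_cofactorHO_blockPartition_one n
    _ = ((ordCompl[2] n.factorial : ℕ) : ℤ) := prod_eval_neg_one_cyclotomic_pow_div n
    _ = _ := by norm_cast
end
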